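/- arXiv:2405.16463 — 5 statements merged into one kernel-verified Lean document; each statement's English description precedes it below -/
import Mathlib

section
/- Let X^m = (X_1,...,X_m) and Y^m = (Y_1,...,Y_m) be jointly distributed random variables taking values in finite sets. Then the mutual information decomposes as the sum of all entries of the information matrix: I(X^m; Y^m) = Σ_{i=1}^m Σ_{j=1}^m I(X_i; Y_j | X^{i-1}, Y^{j-1}). -/
open MeasureTheory Finset

variable {Ω : Type*} [MeasurableSpace Ω]

/-- Shannon entropy of a random variable `W` with values in a finite set:
`H(W) = -∑ w, P(W = w) log P(W = w)`. -/
noncomputable def entropy (μ : Measure Ω) {α : Type*} [Fintype α] (W : Ω → α) : ℝ :=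
  -∑ w : α, (μ (W ⁻¹' {w})).toReal * Real.log (μ (W ⁻¹' {w})).toReal

/-- Conditional entropy `H(W | V) = H(W, V) - H(V)`. -/
noncomputable def condEntropy (μ : Measure Ω) {α β : Type*} [Fintype α] [Fintype β]
    (W : Ω → α) (V : Ω → β) : ℝ :=
  entropy μ (fun ω => (W ω, V ω)) - entropy μ V

/-- Conditional mutual information `I(A; B | C) = H(A|C) + H(B|C) - H(A,B|C)`. -/
noncomputable def condMI (μ : Measure Ω) {α β γ : Type*} [Fintype α] [Fintype β] [Fintype γ]
    (A : Ω → α) (B : Ω → β) (C : Ω → γ) : ℝ :=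
  condEntropy μ A C + condEntropy μ B C - condEntropy μ (fun ω => (A ω, B ω)) C

/-- Mutual information `I(A; B) = H(A) + H(B) - H(A,B)`. -/
noncomputable def mutualInfo (μ : Measure Ω) {α β : Type*} [Fintype α] [Fintype β]
    (A : Ω → α) (B : Ω → β) : ℝ :=
  entropy μ A + entropy μ B - entropy μ (fun ω => (A ω, B ω))

/-- The prefix `X^i = (X_1, …, X_i)` of the sequence `X` (1-based indexing);
`X^0` is the empty (constant) random variable. -/
def pref {𝒳 : Type*} (X : ℕ → Ω → 𝒳) (i : ℕ) : Ω → (Fin i → 𝒳) :=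
  fun ω t => X (t.1 + 1) ω

/-- The InfoMat entry `I_{i,j} = I(X_i; Y_j | X^{i-1}, Y^{j-1})`. -/
noncomputable def infoMat (μ : Measure Ω) {𝒳 𝒴 : Type*} [Fintype 𝒳] [Fintype 𝒴]
    (X : ℕ → Ω → 𝒳) (Y : ℕ → Ω → 𝒴) (i j : ℕ) : ℝ :=
  condMI μ (X i) (Y j) (fun ω => (pref X (i - 1) ω, pref Y (j - 1) ω))

/-- Directed information `I(X^m → Y^m) = ∑_{i=1}^m I(X^i; Y_i | Y^{i-1})`. -/
noncomputable def directedInfo (μ : Measure Ω) {𝒳 𝒴 : Type*} [Fintype 𝒳] [Fintype 𝒴]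
    (m : ℕ) (X : ℕ → Ω → 𝒳) (Y : ℕ → Ω → 𝒴) : ℝ :=
  ∑ i ∈ Finset.Icc 1 m, condMI μ (pref X i) (Y i) (pref Y (i - 1))

/-- `k`-step delayed directed information
`I(D^k ∘ X^m → Y^m) = ∑_{i=k+1}^m I(X^{i-k}; Y_i | Y^{i-1})`. -/
noncomputable def delayedDI (μ : Measure Ω) {𝒳 𝒴 : Type*} [Fintype 𝒳] [Fintype 𝒴]
    (m k : ℕ) (X : ℕ → Ω → 𝒳) (Y : ℕ → Ω → 𝒴) : ℝ :=
  ∑ i ∈ Finset.Icc (k + 1) m, condMI μ (pref X (i - k)) (Y i) (pref Y (i - 1))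

/-- Instantaneous information `I_inst(X^m, Y^m) = ∑_{i=1}^m I(X_i; Y_i | X^{i-1}, Y^{i-1})`. -/
noncomputable def instInfo (μ : Measure Ω) {𝒳 𝒴 : Type*} [Fintype 𝒳] [Fintype 𝒴]
    (m : ℕ) (X : ℕ → Ω → 𝒳) (Y : ℕ → Ω → 𝒴) : ℝ :=
  ∑ i ∈ Finset.Icc 1 m, infoMat μ X Y i i

variable {𝒳 𝒴 : Type*} [Fintype 𝒳] [MeasurableSpace 𝒳] [MeasurableSingletonClass 𝒳]
  [Fintype 𝒴] [MeasurableSpace 𝒴] [MeasurableSingletonClass 𝒴]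

theorem entropy_equiv' (μ : Measure Ω) {α β : Type*} [Fintype α] [Fintype β]
    (W : Ω → α) (V : Ω → β) (e : α ≃ β) (h : ∀ ω, V ω = e (W ω)) :
    entropy μ V = entropy μ W := by
  unfold entropy
  congr 1
  symm
  apply Fintype.sum_equiv e
  intro w
  have : V ⁻¹' {e w} = W ⁻¹' {w} := by
    ext ω
    simp [h]
  rw [this]

def snocE (α : Type*) (n : ℕ) : α × (Fin n → α) ≃ (Fin (n + 1) → α) where
  toFun p := Fin.snoc (α := fun _ => α) p.2 p.1
  invFun P := (P (Fin.last n), Fin.init P)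
  left_inv p := by simp
  right_inv P := by simp

theorem snocE_pref {α : Type*} (X : ℕ → Ω → α) (n : ℕ) (ω : Ω) :
    pref X (n + 1) ω = snocE α n (X (n + 1) ω, pref X n ω) := by
  apply (snocE α n).symm.injective
  rw [Equiv.symm_apply_apply]
  rfl

noncomputable def jointE (μ : Measure Ω) {α β : Type*} [Fintype α] [Fintype β]
    (X : ℕ → Ω → α) (Y : ℕ → Ω → β) (a b : ℕ) : ℝ :=
  entropy μ (fun ω => (pref X a ω, pref Y b ω))

theorem infoMat_eq_joint (μ : Measure Ω) {α β : Type*} [Fintype α] [Fintype β]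
    (X : ℕ → Ω → α) (Y : ℕ → Ω → β) (i j : ℕ) :
    infoMat μ X Y (i + 1) (j + 1) =
      (jointE μ X Y (i + 1) j - jointE μ X Y (i + 1) (j + 1))
        - (jointE μ X Y i j - jointE μ X Y i (j + 1)) := by
  have h1 : jointE μ X Y (i + 1) j
      = entropy μ (fun ω => (X (i + 1) ω, (pref X i ω, pref Y j ω))) :=
    entropy_equiv' μ _ _
      ((Equiv.prodAssoc _ _ _).symm.trans ((snocE α i).prodCongr (Equiv.refl _)))
      (fun ω => by simp [snocE_pref])
  have h2 : jointE μ X Y i (j + 1)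
      = entropy μ (fun ω => (Y (j + 1) ω, (pref X i ω, pref Y j ω))) :=
    entropy_equiv' μ _ _
      ((Equiv.prodAssoc _ _ _).symm.trans
        (((Equiv.prodComm _ _).prodCongr (Equiv.refl _)).trans
        ((Equiv.prodAssoc _ _ _).trans ((Equiv.refl _).prodCongr (snocE β j)))))
      (fun ω => by simp [snocE_pref])
  have h3 : jointE μ X Y (i + 1) (j + 1)
      = entropy μ (fun ω => ((X (i + 1) ω, Y (j + 1) ω), (pref X i ω, pref Y j ω))) :=
    entropy_equiv' μ _ _
      ((Equiv.prodProdProdComm _ _ _ _).trans ((snocE α i).prodCongr (snocE β j)))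
      (fun ω => by simp [snocE_pref])
  unfold infoMat condMI condEntropy
  change (entropy μ (fun ω => (X (i + 1) ω, (pref X i ω, pref Y j ω))) - jointE μ X Y i j)
    + (entropy μ (fun ω => (Y (j + 1) ω, (pref X i ω, pref Y j ω))) - jointE μ X Y i j)
    - (entropy μ (fun ω => ((X (i + 1) ω, Y (j + 1) ω), (pref X i ω, pref Y j ω)))
      - jointE μ X Y i j) = _
  rw [h1, h2, h3]
  ring

/-- The mutual information `I(X^m; Y^m)` is the sum of all entries of the
InfoMat: `I(X^m; Y^m) = ∑_{i=1}^m ∑_{j=1}^m I(X_i; Y_j | X^{i-1}, Y^{j-1})`. -/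
theorem mutualInfo_eq_sum_infoMat (μ : Measure Ω) [IsProbabilityMeasure μ]
    (m : ℕ) (X : ℕ → Ω → 𝒳) (Y : ℕ → Ω → 𝒴)
    (hX : ∀ i, Measurable (X i)) (hY : ∀ j, Measurable (Y j)) :
    mutualInfo μ (pref X m) (pref Y m)
      = ∑ i ∈ Finset.Icc 1 m, ∑ j ∈ Finset.Icc 1 m, infoMat μ X Y i j := by
  have e1 : jointE μ X Y m 0 = entropy μ (pref X m) :=
    entropy_equiv' μ _ _ (Equiv.prodUnique _ _).symm
      (fun ω => Prod.ext rfl (Subsingleton.elim _ _))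
  have e2 : jointE μ X Y 0 m = entropy μ (pref Y m) :=
    entropy_equiv' μ _ _ (Equiv.uniqueProd _ _).symm
      (fun ω => Prod.ext (Subsingleton.elim _ _) rfl)
  have e3 : jointE μ X Y 0 0 = 0 := by
    have : jointE μ X Y 0 0 = entropy μ (fun _ => ()) :=
      entropy_equiv' μ _ _ ((Equiv.prodUnique (Fin 0 → 𝒳) (Fin 0 → 𝒴)).trans (Equiv.ofUnique _ _)).symm
        (fun ω => Subsingleton.elim _ _)
    rw [this]
    simp [entropy]
  have key : ∀ f : ℕ → ℝ, ∑ i ∈ Finset.Icc 1 m, f i = ∑ i ∈ Finset.range m, f (i + 1) := by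
    intro f
    rw [Finset.range_eq_Ico, Finset.sum_Ico_add' f 0 m 1]
    rfl
  simp only [key, infoMat_eq_joint]
  have inner : ∀ i, ∑ j ∈ Finset.range m,
      ((jointE μ X Y (i + 1) j - jointE μ X Y (i + 1) (j + 1))
        - (jointE μ X Y i j - jointE μ X Y i (j + 1)))
      = (jointE μ X Y (i + 1) 0 - jointE μ X Y (i + 1) m)
        - (jointE μ X Y i 0 - jointE μ X Y i m) := by
    intro i
    rw [Finset.sum_sub_distrib, Finset.sum_range_sub', Finset.sum_range_sub']
  rw [Finset.sum_congr rfl (fun i _ => inner i),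
    Finset.sum_range_sub (fun i => jointE μ X Y i 0 - jointE μ X Y i m)]
  rw [e1, e2, e3]
  unfold mutualInfo jointE
  ring
end

section
/- Let X^m and Y^m be jointly distributed random variables taking values in finite sets. Then the directed information equals the sum of the InfoMat entries on and above the main diagonal: I(X^m → Y^m) = Σ_{1 ≤ i ≤ j ≤ m} I(X_i; Y_j | X^{i-1}, Y^{j-1}). -/
open MeasureTheory Finset

variable {Ω : Type*} [MeasurableSpace Ω]

variable {𝒳 𝒴 : Type*} [Fintype 𝒳] [MeasurableSpace 𝒳] [MeasurableSingletonClass 𝒳]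
  [Fintype 𝒴] [MeasurableSpace 𝒴] [MeasurableSingletonClass 𝒴]

theorem entropy_inj_aux {Ω : Type*} [MeasurableSpace Ω] (μ : Measure Ω) {α β : Type*}
    [Fintype α] [Fintype β] (W : Ω → α) (V : Ω → β) (f : α → β) (hf : Function.Injective f)
    (hV : ∀ ω, V ω = f (W ω)) : entropy μ V = entropy μ W := by
  unfold entropy
  congr 1
  symm
  refine Fintype.sum_of_injective f hf _ _ ?_ ?_
  · intro b hb
    have : V ⁻¹' {b} = ∅ := by
      ext ω
      simp only [Set.mem_preimage, Set.mem_singleton_iff, Set.mem_empty_iff_false, iff_false]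
      intro h
      exact hb ⟨W ω, by rw [← hV, h]⟩
    simp [this]
  · intro a
    have : V ⁻¹' {f a} = W ⁻¹' {a} := by
      ext ω
      simp [hV, hf.eq_iff]
    rw [this]

theorem snoc_ext_aux {A : Type*} {n : ℕ} {a b : Fin (n + 1) → A}
    (h : a (Fin.last n) = b (Fin.last n))
    (h' : (fun t : Fin n => a t.castSucc) = fun t : Fin n => b t.castSucc) : a = b := by
  funext t
  refine Fin.lastCases h (fun i => congrFun h' i) t

/-- joint entropy of prefixes -/
noncomputable def jointG {Ω : Type*} [MeasurableSpace Ω] (μ : Measure Ω) {A B : Type*}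
    [Fintype A] [Fintype B] (X : ℕ → Ω → A) (Y : ℕ → Ω → B) (i j : ℕ) : ℝ :=
  entropy μ (fun ω => (pref X i ω, pref Y j ω))

theorem infoMat_aux {Ω : Type*} [MeasurableSpace Ω] (μ : Measure Ω) {A B : Type*}
    [Fintype A] [Fintype B] (X : ℕ → Ω → A) (Y : ℕ → Ω → B) (i j : ℕ) :
    infoMat μ X Y (i + 1) (j + 1) = jointG μ X Y (i + 1) j + jointG μ X Y i (j + 1)
      - jointG μ X Y (i + 1) (j + 1) - jointG μ X Y i j := by
  have h1 : entropy μ (fun ω => (X (i + 1) ω, (pref X i ω, pref Y j ω)))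
      = jointG μ X Y (i + 1) j := by
    refine entropy_inj_aux μ _ _
      (fun p => (p.1 (Fin.last i), ((fun t : Fin i => p.1 t.castSucc), p.2))) ?_ (fun ω => rfl)
    rintro ⟨a, b⟩ ⟨a', b'⟩ h
    simp only [Prod.mk.injEq] at h
    obtain ⟨h1, h2, h3⟩ := h
    exact Prod.ext (snoc_ext_aux h1 h2) h3
  have h2 : entropy μ (fun ω => (Y (j + 1) ω, (pref X i ω, pref Y j ω)))
      = jointG μ X Y i (j + 1) := by
    refine entropy_inj_aux μ _ _
      (fun p => (p.2 (Fin.last j), (p.1, (fun t : Fin j => p.2 t.castSucc)))) ?_ (fun ω => rfl)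
    rintro ⟨a, b⟩ ⟨a', b'⟩ h
    simp only [Prod.mk.injEq] at h
    obtain ⟨h1, h2, h3⟩ := h
    exact Prod.ext h2 (snoc_ext_aux h1 h3)
  have h3 : entropy μ (fun ω => ((X (i + 1) ω, Y (j + 1) ω), (pref X i ω, pref Y j ω)))
      = jointG μ X Y (i + 1) (j + 1) := by
    refine entropy_inj_aux μ _ _
      (fun p => ((p.1 (Fin.last i), p.2 (Fin.last j)),
        ((fun t : Fin i => p.1 t.castSucc), (fun t : Fin j => p.2 t.castSucc)))) ?_ (fun ω => rfl)
    rintro ⟨a, b⟩ ⟨a', b'⟩ h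
    simp only [Prod.mk.injEq] at h
    obtain ⟨⟨h1, h2⟩, h3, h4⟩ := h
    exact Prod.ext (snoc_ext_aux h1 h3) (snoc_ext_aux h2 h4)
  change condMI μ (X (i + 1)) (Y (j + 1)) (fun ω => (pref X i ω, pref Y j ω)) = _
  simp only [condMI, condEntropy]
  rw [h1, h2, h3]
  simp only [jointG]
  ring

theorem condMI_aux {Ω : Type*} [MeasurableSpace Ω] (μ : Measure Ω) {A B : Type*}
    [Fintype A] [Fintype B] (X : ℕ → Ω → A) (Y : ℕ → Ω → B) (i j : ℕ) :
    condMI μ (pref X i) (Y (j + 1)) (pref Y j) = jointG μ X Y i j + jointG μ X Y 0 (j + 1)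
      - jointG μ X Y i (j + 1) - jointG μ X Y 0 j := by
  have h0 : entropy μ (pref Y j) = jointG μ X Y 0 j := by
    refine entropy_inj_aux μ _ _ (fun p => p.2) ?_ (fun ω => rfl)
    rintro ⟨a, b⟩ ⟨a', b'⟩ h
    exact Prod.ext (Subsingleton.elim _ _) h
  have h1 : entropy μ (fun ω => (Y (j + 1) ω, pref Y j ω)) = jointG μ X Y 0 (j + 1) := by
    refine entropy_inj_aux μ _ _
      (fun p => (p.2 (Fin.last j), (fun t : Fin j => p.2 t.castSucc))) ?_ (fun ω => rfl)
    rintro ⟨a, b⟩ ⟨a', b'⟩ h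
    simp only [Prod.mk.injEq] at h
    exact Prod.ext (Subsingleton.elim _ _) (snoc_ext_aux h.1 h.2)
  have h2 : entropy μ (fun ω => ((pref X i ω, Y (j + 1) ω), pref Y j ω))
      = jointG μ X Y i (j + 1) := by
    refine entropy_inj_aux μ _ _
      (fun p => ((p.1, p.2 (Fin.last j)), (fun t : Fin j => p.2 t.castSucc))) ?_ (fun ω => rfl)
    rintro ⟨a, b⟩ ⟨a', b'⟩ h
    simp only [Prod.mk.injEq] at h
    exact Prod.ext h.1.1 (snoc_ext_aux h.1.2 h.2)
  simp only [condMI, condEntropy]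
  rw [h0, h1, h2]
  simp only [jointG]
  ring

theorem chain_aux {Ω : Type*} [MeasurableSpace Ω] (μ : Measure Ω) {A B : Type*}
    [Fintype A] [Fintype B] (X : ℕ → Ω → A) (Y : ℕ → Ω → B) (n j : ℕ) :
    condMI μ (pref X n) (Y (j + 1)) (pref Y j)
      = ∑ i ∈ Finset.Icc 1 n, infoMat μ X Y i (j + 1) := by
  induction n with
  | zero => rw [condMI_aux]; simp
  | succ n ih =>
    rw [Finset.sum_Icc_succ_top (by omega), ← ih, infoMat_aux, condMI_aux, condMI_aux]
    ring

/-- Directed information is the sum of the InfoMat entries on and above the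
main diagonal: `I(X^m → Y^m) = ∑_{1 ≤ i ≤ j ≤ m} I(X_i; Y_j | X^{i-1}, Y^{j-1})`. -/
theorem directedInfo_eq_sum_upper_infoMat (μ : Measure Ω) [IsProbabilityMeasure μ]
    (m : ℕ) (X : ℕ → Ω → 𝒳) (Y : ℕ → Ω → 𝒴)
    (hX : ∀ i, Measurable (X i)) (hY : ∀ j, Measurable (Y j)) :
    directedInfo μ m X Y
      = ∑ i ∈ Finset.Icc 1 m, ∑ j ∈ Finset.Icc i m, infoMat μ X Y i j := by
  unfold directedInfo
  have h : ∀ j ∈ Finset.Icc 1 m, condMI μ (pref X j) (Y j) (pref Y (j - 1))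
      = ∑ i ∈ Finset.Icc 1 j, infoMat μ X Y i j := by
    intro j hj
    obtain ⟨k, rfl⟩ : ∃ k, j = k + 1 := ⟨j - 1, by have := (Finset.mem_Icc.1 hj).1; omega⟩
    exact chain_aux μ X Y (k + 1) k
  rw [Finset.sum_congr rfl h]
  refine Finset.sum_comm' ?_
  intro x y
  simp only [Finset.mem_Icc]
  omega
end

section
/- Let X^m and Y^m be jointly distributed random variables taking values in finite sets and let 0 ≤ k ≤ m. Then the k-step delayed directed information equals the sum of the InfoMat entries lying at least k above the main diagonal: I(D^k ∘ X^m → Y^m) = Σ_{(i,j): j ≥ i + k, 1 ≤ i, j ≤ m} I(X_i; Y_j | X^{i-1}, Y^{j-1}). -/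
open MeasureTheory Finset

variable {Ω : Type*} [MeasurableSpace Ω]

theorem entropy_congr_equiv (μ : Measure Ω) {α β : Type*} [Fintype α] [Fintype β]
    (W : Ω → α) (V : Ω → β) (e : α ≃ β) (h : ∀ ω, e (W ω) = V ω) :
    entropy μ W = entropy μ V := by
  unfold entropy
  congr 1
  refine Fintype.sum_equiv e _ _ fun w => ?_
  have : W ⁻¹' {w} = V ⁻¹' {e w} := by
    ext ω
    simp [← h ω]
  rw [this]

def prefEquiv (α : Type*) (n : ℕ) : (Fin (n + 1) → α) ≃ α × (Fin n → α) where
  toFun f := (f (Fin.last n), fun t => f t.castSucc)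
  invFun p := Fin.snoc (α := fun _ => α) p.2 p.1
  left_inv f := by
    ext t
    refine Fin.lastCases ?_ (fun i => ?_) t <;> simp
  right_inv p := by simp

theorem condMI_pref_zero (μ : Measure Ω) {𝒳 β γ : Type*} [Fintype 𝒳] [Fintype β] [Fintype γ]
    (X : ℕ → Ω → 𝒳) (B : Ω → β) (C : Ω → γ) :
    condMI μ (pref X 0) B C = 0 := by
  unfold condMI condEntropy
  have h1 : entropy μ (fun ω => (pref X 0 ω, C ω)) = entropy μ C :=
    entropy_congr_equiv μ _ _ (Equiv.uniqueProd γ (Fin 0 → 𝒳)) fun ω => rfl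
  have h2 : entropy μ (fun ω => ((pref X 0 ω, B ω), C ω)) = entropy μ (fun ω => (B ω, C ω)) :=
    entropy_congr_equiv μ _ _
      ((Equiv.uniqueProd β (Fin 0 → 𝒳)).prodCongr (Equiv.refl γ)) fun ω => rfl
  rw [h1, h2]
  ring

theorem condMI_pref_succ (μ : Measure Ω) {𝒳 β γ : Type*} [Fintype 𝒳] [Fintype β] [Fintype γ]
    (X : ℕ → Ω → 𝒳) (B : Ω → β) (C : Ω → γ) (n : ℕ) :
    condMI μ (pref X (n + 1)) B C = condMI μ (pref X n) B C
      + condMI μ (X (n + 1)) B (fun ω => (pref X n ω, C ω)) := by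
  unfold condMI condEntropy
  have h1 : entropy μ (fun ω => (pref X (n + 1) ω, C ω))
      = entropy μ (fun ω => (X (n + 1) ω, (pref X n ω, C ω))) :=
    entropy_congr_equiv μ _ _
      (((prefEquiv 𝒳 n).prodCongr (Equiv.refl γ)).trans (Equiv.prodAssoc _ _ _)) fun ω => rfl
  have h2 : entropy μ (fun ω => ((pref X n ω, B ω), C ω))
      = entropy μ (fun ω => (B ω, (pref X n ω, C ω))) :=
    entropy_congr_equiv μ _ _
      (((Equiv.prodComm _ _).prodCongr (Equiv.refl γ)).trans (Equiv.prodAssoc _ _ _)) fun ω => rfl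
  have h3 : entropy μ (fun ω => ((pref X (n + 1) ω, B ω), C ω))
      = entropy μ (fun ω => ((X (n + 1) ω, B ω), (pref X n ω, C ω))) :=
    entropy_congr_equiv μ _ _
      { toFun := fun p => (((prefEquiv 𝒳 n p.1.1).1, p.1.2), ((prefEquiv 𝒳 n p.1.1).2, p.2))
        invFun := fun q => (((prefEquiv 𝒳 n).symm (q.1.1, q.2.1), q.1.2), q.2.2)
        left_inv := fun p => by simp
        right_inv := fun q => by simp } fun ω => rfl
  rw [h1, h2, h3]
  ring

theorem condMI_pref_eq_sum (μ : Measure Ω) {𝒳 β γ : Type*} [Fintype 𝒳] [Fintype β] [Fintype γ]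
    (X : ℕ → Ω → 𝒳) (B : Ω → β) (C : Ω → γ) (n : ℕ) :
    condMI μ (pref X n) B C
      = ∑ i ∈ Finset.Icc 1 n, condMI μ (X i) B (fun ω => (pref X (i - 1) ω, C ω)) := by
  induction n with
  | zero => simp [condMI_pref_zero]
  | succ n ih =>
    rw [Finset.sum_Icc_succ_top (by omega), condMI_pref_succ, ih]
    rfl

variable {𝒳 𝒴 : Type*} [Fintype 𝒳] [MeasurableSpace 𝒳] [MeasurableSingletonClass 𝒳]
  [Fintype 𝒴] [MeasurableSpace 𝒴] [MeasurableSingletonClass 𝒴]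

/-- For `0 ≤ k ≤ m`, the `k`-step delayed directed information is the sum of
the InfoMat entries lying at least `k` above the main diagonal:
`I(D^k ∘ X^m → Y^m) = ∑_{(i,j) : j ≥ i + k, 1 ≤ i, j ≤ m} I(X_i; Y_j | X^{i-1}, Y^{j-1})`. -/
theorem delayedDI_eq_sum_upper_infoMat (μ : Measure Ω) [IsProbabilityMeasure μ]
    (m k : ℕ) (hk : k ≤ m) (X : ℕ → Ω → 𝒳) (Y : ℕ → Ω → 𝒴)
    (hX : ∀ i, Measurable (X i)) (hY : ∀ j, Measurable (Y j)) :
    delayedDI μ m k X Y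
      = ∑ i ∈ Finset.Icc 1 m, ∑ j ∈ Finset.Icc (i + k) m, infoMat μ X Y i j := by
  unfold delayedDI
  simp_rw [condMI_pref_eq_sum]
  refine Finset.sum_comm' fun j i => ?_
  simp only [Finset.mem_Icc]
  omega
end

section
/- (Conservation of transfer entropy.) Let X^m and Y^m be jointly distributed random variables taking values in finite sets. Then I(X^m; Y^m) = Σ_{i=1}^{m-1} [ T^{X→Y}_{i+1}(i,i) + T^{Y→X}_{i+1}(i,i) ] + I_inst(X^m, Y^m), where T^{X→Y}_{i+1}(i,i) = I(X^i; Y_{i+1} | Y^i) and T^{Y→X}_{i+1}(i,i) = I(Y^i; X_{i+1} | X^i). -/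
open MeasureTheory Finset

variable {Ω : Type*} [MeasurableSpace Ω]

variable {𝒳 𝒴 : Type*} [Fintype 𝒳] [MeasurableSpace 𝒳] [MeasurableSingletonClass 𝒳]
  [Fintype 𝒴] [MeasurableSpace 𝒴] [MeasurableSingletonClass 𝒴]

theorem aux_entropy_equiv (μ : Measure Ω) {α β : Type*} [Fintype α] [Fintype β]
    {W : Ω → α} {V : Ω → β} (e : α ≃ β) (h : ∀ ω, e (W ω) = V ω) :
    entropy μ W = entropy μ V := by
  unfold entropy
  congr 1
  refine Fintype.sum_equiv e _ _ (fun w => ?_)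
  have : W ⁻¹' {w} = V ⁻¹' {e w} := by
    ext ω
    simp [← h ω]
  rw [this]

/-- Split off the last coordinate. -/
def auxSnoc (α : Type*) (n : ℕ) : α × (Fin n → α) ≃ (Fin (n + 1) → α) :=
  Fin.snocEquiv (fun _ => α)

theorem auxSnoc_pref {α : Type*} (X : ℕ → Ω → α) (n : ℕ) (ω : Ω) :
    auxSnoc α n (X (n + 1) ω, pref X n ω) = pref X (n + 1) ω := by
  funext t
  refine Fin.lastCases ?_ (fun i => ?_) t
  · simp [auxSnoc, Fin.snocEquiv, pref]
  · simp [auxSnoc, Fin.snocEquiv, pref]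

theorem aux_TE (μ : Measure Ω) {α β : Type*} [Fintype α] [Fintype β]
    (X : ℕ → Ω → α) (Y : ℕ → Ω → β) (i : ℕ) :
    condMI μ (pref X i) (Y (i + 1)) (pref Y i)
      = entropy μ (fun ω => (pref X i ω, pref Y i ω)) + entropy μ (pref Y (i + 1))
        - entropy μ (pref Y i) - entropy μ (fun ω => (pref X i ω, pref Y (i + 1) ω)) := by
  unfold condMI condEntropy
  rw [aux_entropy_equiv μ (auxSnoc β i) (auxSnoc_pref Y i),
    aux_entropy_equiv μ (W := fun ω => ((pref X i ω, Y (i + 1) ω), pref Y i ω))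
      (V := fun ω => (pref X i ω, pref Y (i + 1) ω))
      ((Equiv.prodAssoc _ _ _).trans ((Equiv.refl _).prodCongr (auxSnoc β i)))
      (fun ω => by simp [auxSnoc_pref])]
  ring

theorem aux_swap (μ : Measure Ω) {α β : Type*} [Fintype α] [Fintype β]
    (A : Ω → α) (B : Ω → β) :
    entropy μ (fun ω => (A ω, B ω)) = entropy μ (fun ω => (B ω, A ω)) :=
  aux_entropy_equiv μ (Equiv.prodComm _ _) (fun _ => rfl)

theorem aux_inst (μ : Measure Ω) {α β : Type*} [Fintype α] [Fintype β]
    (X : ℕ → Ω → α) (Y : ℕ → Ω → β) (i : ℕ) :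
    infoMat μ X Y (i + 1) (i + 1)
      = entropy μ (fun ω => (pref X (i + 1) ω, pref Y i ω))
        + entropy μ (fun ω => (pref X i ω, pref Y (i + 1) ω))
        - entropy μ (fun ω => (pref X i ω, pref Y i ω))
        - entropy μ (fun ω => (pref X (i + 1) ω, pref Y (i + 1) ω)) := by
  change condMI μ (X (i + 1)) (Y (i + 1)) (fun ω => (pref X i ω, pref Y i ω)) = _
  unfold condMI condEntropy
  rw [aux_entropy_equiv μ (W := fun ω => (X (i + 1) ω, (pref X i ω, pref Y i ω)))
      (V := fun ω => (pref X (i + 1) ω, pref Y i ω))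
      ((Equiv.prodAssoc _ _ _).symm.trans ((auxSnoc α i).prodCongr (Equiv.refl _)))
      (fun ω => by simp [auxSnoc_pref]),
    aux_entropy_equiv μ (W := fun ω => (Y (i + 1) ω, (pref X i ω, pref Y i ω)))
      (V := fun ω => (pref X i ω, pref Y (i + 1) ω))
      (((Equiv.refl _).prodCongr (Equiv.prodComm _ _)).trans
        ((Equiv.prodAssoc _ _ _).symm.trans
          (((auxSnoc β i).prodCongr (Equiv.refl _)).trans (Equiv.prodComm _ _))))
      (fun ω => by simp [auxSnoc_pref]),
    aux_entropy_equiv μ (W := fun ω => ((X (i + 1) ω, Y (i + 1) ω), (pref X i ω, pref Y i ω)))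
      (V := fun ω => (pref X (i + 1) ω, pref Y (i + 1) ω))
      ((Equiv.prodProdProdComm _ _ _ _).trans ((auxSnoc α i).prodCongr (auxSnoc β i)))
      (fun ω => by simp [auxSnoc_pref])]
  ring

theorem aux_pref0 (μ : Measure Ω) [IsProbabilityMeasure μ] {α : Type*} [Fintype α]
    (X : ℕ → Ω → α) : entropy μ (pref X 0) = 0 := by
  have h : ∀ w, pref X 0 ⁻¹' {w} = Set.univ := by
    intro w
    ext ω
    simpa using Subsingleton.elim _ _
  simp [entropy, h]

theorem aux_pair0 (μ : Measure Ω) {α β : Type*} [Fintype α] [Fintype β]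
    (X : ℕ → Ω → α) (V : Ω → β) :
    entropy μ (fun ω => (pref X 0 ω, V ω)) = entropy μ V :=
  aux_entropy_equiv μ (Equiv.uniqueProd β (Fin 0 → α)) (fun _ => rfl)

/-- **Conservation of transfer entropy.**
`I(X^m; Y^m) = ∑_{i=1}^{m-1} [T^{X→Y}_{i+1}(i,i) + T^{Y→X}_{i+1}(i,i)] + I_inst(X^m, Y^m)`,
where `T^{X→Y}_{i+1}(i,i) = I(X^i; Y_{i+1} | Y^i)` and `T^{Y→X}_{i+1}(i,i) = I(Y^i; X_{i+1} | X^i)`. -/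
theorem transferEntropy_conservation (μ : Measure Ω) [IsProbabilityMeasure μ]
    (m : ℕ) (X : ℕ → Ω → 𝒳) (Y : ℕ → Ω → 𝒴)
    (hX : ∀ i, Measurable (X i)) (hY : ∀ j, Measurable (Y j)) :
    mutualInfo μ (pref X m) (pref Y m)
      = (∑ i ∈ Finset.Icc 1 (m - 1),
          (condMI μ (pref X i) (Y (i + 1)) (pref Y i)
            + condMI μ (pref Y i) (X (i + 1)) (pref X i)))
        + instInfo μ m X Y := by
  have step : ∀ i, mutualInfo μ (pref X (i + 1)) (pref Y (i + 1))
      = mutualInfo μ (pref X i) (pref Y i)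
        + (condMI μ (pref X i) (Y (i + 1)) (pref Y i)
            + condMI μ (pref Y i) (X (i + 1)) (pref X i)) + infoMat μ X Y (i + 1) (i + 1) := by
    intro i
    rw [aux_TE, aux_TE, aux_inst, aux_swap μ (pref Y i) (pref X i),
      aux_swap μ (pref Y i) (pref X (i + 1))]
    unfold mutualInfo
    ring
  have h0 : mutualInfo μ (pref X 0) (pref Y 0) = 0 := by
    unfold mutualInfo
    rw [aux_pair0, aux_pref0, aux_pref0]
    ring
  have z : condMI μ (pref X 0) (Y (0 + 1)) (pref Y 0)
            + condMI μ (pref Y 0) (X (0 + 1)) (pref X 0) = 0 := by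
    rw [aux_TE, aux_TE, aux_pair0, aux_pair0, aux_pair0, aux_pair0]
    ring
  unfold instInfo
  induction m with
  | zero => simp [h0]
  | succ n ih =>
    rw [step, ih, Finset.sum_Icc_succ_top (by omega : 1 ≤ n + 1)]
    cases n with
    | zero =>
      rw [z]
      simp
    | succ k =>
      simp only [Nat.add_sub_cancel]
      rw [Finset.sum_Icc_succ_top (by omega : 1 ≤ k + 1)
        (fun i => condMI μ (pref X i) (Y (i + 1)) (pref Y i)
            + condMI μ (pref Y i) (X (i + 1)) (pref X i))]
      ring
end

section
/- (Directed information chain rule.) Let X^m and Y^m be jointly distributed random variables taking values in finite sets and let 0 ≤ k < m. Then I(D^k ∘ X^m → Y^m) = I(D^{k+1} ∘ X^m → Y^m) + Σ_{i=k+1}^m I(X_{i-k}; Y_i | X^{i-k-1}, Y^{i-1}), i.e., the k-step delayed directed information equals the (k+1)-step delayed directed information plus the sum of the k-th superdiagonal entries of the InfoMat. -/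
open MeasureTheory Finset

variable {Ω : Type*} [MeasurableSpace Ω]

variable {𝒳 𝒴 : Type*} [Fintype 𝒳] [MeasurableSpace 𝒳] [MeasurableSingletonClass 𝒳]
  [Fintype 𝒴] [MeasurableSpace 𝒴] [MeasurableSingletonClass 𝒴]

theorem entropy_inj (μ : Measure Ω) {α β : Type*} [Fintype α] [Fintype β]
    (f : α → β) (hf : Function.Injective f) (W : Ω → α) (W' : Ω → β)
    (h : ∀ ω, W' ω = f (W ω)) : entropy μ W = entropy μ W' := by
  unfold entropy
  congr 1
  refine Fintype.sum_of_injective f hf _ _ ?_ ?_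
  · intro b hb
    have : W' ⁻¹' {b} = ∅ := by
      ext ω
      simp only [Set.mem_preimage, Set.mem_singleton_iff, Set.mem_empty_iff_false, iff_false]
      intro hw
      exact hb ⟨W ω, by rw [← h, hw]⟩
    simp [this]
  · intro a
    have : W' ⁻¹' {f a} = W ⁻¹' {a} := by
      ext ω
      simp [h, hf.eq_iff]
    rw [this]

theorem condMI_zero (μ : Measure Ω) {α β γ : Type*} [Fintype α] [Fintype β] [Fintype γ]
    (X : ℕ → Ω → α) (B : Ω → β) (C : Ω → γ) : condMI μ (pref X 0) B C = 0 := by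
  have h1 := entropy_inj μ (fun p : (Fin 0 → α) × γ => p.2)
    (by rintro ⟨a, b⟩ ⟨c, d⟩ h; exact Prod.ext (Subsingleton.elim _ _) h)
    (fun ω => (pref X 0 ω, C ω)) C (fun _ => rfl)
  have h2 := entropy_inj μ (fun p : ((Fin 0 → α) × β) × γ => (p.1.2, p.2))
    (by
      rintro ⟨⟨a, b⟩, c⟩ ⟨⟨a', b'⟩, c'⟩ h
      have := Subsingleton.elim a a'
      simp_all)
    (fun ω => ((pref X 0 ω, B ω), C ω)) (fun ω => (B ω, C ω)) (fun _ => rfl)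
  unfold condMI condEntropy
  rw [h1, h2]
  ring

theorem last_init_inj {α : Type*} {n : ℕ} {p q : Fin (n + 1) → α}
    (h1 : p (Fin.last n) = q (Fin.last n))
    (h2 : (fun t : Fin n => p t.castSucc) = fun t : Fin n => q t.castSucc) : p = q := by
  funext t
  refine Fin.lastCases h1 (fun i => congrFun h2 i) t

theorem condMI_succ (μ : Measure Ω) {α β γ : Type*} [Fintype α] [Fintype β] [Fintype γ]
    (X : ℕ → Ω → α) (B : Ω → β) (C : Ω → γ) (n : ℕ) :
    condMI μ (pref X (n + 1)) B C
      = condMI μ (pref X n) B C + condMI μ (X (n + 1)) B (fun ω => (pref X n ω, C ω)) := by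
  have h1 := entropy_inj μ (fun p : (Fin (n + 1) → α) × γ =>
      (p.1 (Fin.last n), ((fun t : Fin n => p.1 t.castSucc), p.2)))
    (by
      rintro ⟨a, c⟩ ⟨a', c'⟩ h
      simp only [Prod.mk.injEq] at h
      exact Prod.ext (last_init_inj h.1 h.2.1) h.2.2)
    (fun ω => (pref X (n + 1) ω, C ω))
    (fun ω => (X (n + 1) ω, (pref X n ω, C ω))) (fun _ => rfl)
  have h2 := entropy_inj μ (fun p : ((Fin (n + 1) → α) × β) × γ =>
      ((p.1.1 (Fin.last n), p.1.2), ((fun t : Fin n => p.1.1 t.castSucc), p.2)))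
    (by
      rintro ⟨⟨a, b⟩, c⟩ ⟨⟨a', b'⟩, c'⟩ h
      simp only [Prod.mk.injEq] at h
      exact Prod.ext (Prod.ext (last_init_inj h.1.1 h.2.1) h.1.2) h.2.2)
    (fun ω => ((pref X (n + 1) ω, B ω), C ω))
    (fun ω => ((X (n + 1) ω, B ω), (pref X n ω, C ω))) (fun _ => rfl)
  have h3 := entropy_inj μ (fun p : ((Fin n → α) × β) × γ => (p.1.2, (p.1.1, p.2)))
    (by
      rintro ⟨⟨a, b⟩, c⟩ ⟨⟨a', b'⟩, c'⟩ h
      simp only [Prod.mk.injEq] at h ⊢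
      tauto)
    (fun ω => ((pref X n ω, B ω), C ω))
    (fun ω => (B ω, (pref X n ω, C ω))) (fun _ => rfl)
  unfold condMI condEntropy
  rw [h1, h2, h3]
  ring

/-- **Directed information chain rule.** For `0 ≤ k < m`,
`I(D^k ∘ X^m → Y^m) = I(D^{k+1} ∘ X^m → Y^m) + ∑_{i=k+1}^m I(X_{i-k}; Y_i | X^{i-k-1}, Y^{i-1})`,
i.e. the `k`-step delayed directed information equals the `(k+1)`-step delayed directed
information plus the sum of the `k`-th superdiagonal entries of the InfoMat. -/
theorem delayedDI_chain_rule (μ : Measure Ω) [IsProbabilityMeasure μ]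
    (m k : ℕ) (hk : k < m) (X : ℕ → Ω → 𝒳) (Y : ℕ → Ω → 𝒴)
    (hX : ∀ i, Measurable (X i)) (hY : ∀ j, Measurable (Y j)) :
    delayedDI μ m k X Y
      = delayedDI μ m (k + 1) X Y
        + ∑ i ∈ Finset.Icc (k + 1) m, infoMat μ X Y (i - k) i := by
  have hd : delayedDI μ m (k + 1) X Y
      = ∑ i ∈ Finset.Icc (k + 1) m, condMI μ (pref X (i - (k + 1))) (Y i) (pref Y (i - 1)) := by
    unfold delayedDI
    refine Finset.sum_subset (Finset.Icc_subset_Icc_left (by omega)) ?_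
    intro i hi hi'
    simp only [Finset.mem_Icc] at hi hi'
    have : i - (k + 1) = 0 := by omega
    rw [this]
    exact condMI_zero μ X _ _
  rw [hd, ← Finset.sum_add_distrib]
  unfold delayedDI
  refine Finset.sum_congr rfl ?_
  intro i hi
  simp only [Finset.mem_Icc] at hi
  obtain ⟨n, rfl⟩ : ∃ n, i = n + k + 1 := ⟨i - (k + 1), by omega⟩
  have e1 : n + k + 1 - k = n + 1 := by omega
  have e2 : n + k + 1 - (k + 1) = n := by omega
  rw [e1, e2]
  exact condMI_succ μ X _ _ n
end
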